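/- Let H be a Hopf monoid in a braided monoidal category C and δ a character of H, with δ-twisted antipode S̃. Then m ∘ ((S ∘ S) ⊗ S̃) ∘ ψ_{H,H} ∘ Δ = η ∘ δ as morphisms H → H. -/

import Mathlib

open CategoryTheory MonoidalCategory

universe v u

/-- A Hopf algebra object (a "braided Hopf algebra") in a braided monoidal category `C`,
consisting of an object `X` with multiplication `mul`, unit `one`, comultiplication
`comul`, counit `counit` and antipode `antipode`, satisfying the usual axioms, with
the compatibility of `mul` and `comul` expressed via the braiding. -/
structure HopfObj (C : Type u) [Category.{v} C] [MonoidalCategory C]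
    [BraidedCategory C] where
  X : C
  mul : X ⊗ X ⟶ X
  one : 𝟙_ C ⟶ X
  comul : X ⟶ X ⊗ X
  counit : X ⟶ 𝟙_ C
  antipode : X ⟶ X
  mul_assoc : (mul ▷ X) ≫ mul = (α_ X X X).hom ≫ (X ◁ mul) ≫ mul
  one_mul : (one ▷ X) ≫ mul = (λ_ X).hom
  mul_one : (X ◁ one) ≫ mul = (ρ_ X).hom
  comul_assoc : comul ≫ (comul ▷ X) ≫ (α_ X X X).hom = comul ≫ (X ◁ comul)
  counit_comul : comul ≫ (counit ▷ X) = (λ_ X).inv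
  comul_counit : comul ≫ (X ◁ counit) = (ρ_ X).inv
  mul_comul : mul ≫ comul =
      (comul ⊗ₘ comul) ≫ (α_ X X (X ⊗ X)).hom ≫ (X ◁ (α_ X X X).inv) ≫
        (X ◁ ((β_ X X).hom ▷ X)) ≫ (X ◁ (α_ X X X).hom) ≫
        (α_ X X (X ⊗ X)).inv ≫ (mul ⊗ₘ mul)
  one_comul : one ≫ comul = (λ_ (𝟙_ C)).inv ≫ (one ⊗ₘ one)
  mul_counit : mul ≫ counit = (counit ⊗ₘ counit) ≫ (λ_ (𝟙_ C)).hom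
  one_counit : one ≫ counit = 𝟙 (𝟙_ C)
  antipode_left : comul ≫ (antipode ▷ X) ≫ mul = counit ≫ one
  antipode_right : comul ≫ (X ◁ antipode) ≫ mul = counit ≫ one

variable {C : Type u} [Category.{v} C] [MonoidalCategory C] [BraidedCategory C]

/-- The `δ`-twisted antipode `S̃ = λ_H ∘ (δ ⊗ S) ∘ Δ`. -/
def HopfObj.twist (A : _root_.HopfObj C) (δ : A.X ⟶ 𝟙_ C) : A.X ⟶ A.X :=
  A.comul ≫ (δ ⊗ₘ A.antipode) ≫ (λ_ A.X).hom

/-- `δ : H ⟶ 𝟙` is a character, i.e. a morphism of monoid objects. -/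
def HopfObj.IsCharacter (A : _root_.HopfObj C) (δ : A.X ⟶ 𝟙_ C) : Prop :=
  A.mul ≫ δ = (δ ⊗ₘ δ) ≫ (λ_ (𝟙_ C)).hom ∧ A.one ≫ δ = 𝟙 (𝟙_ C)

/-- `σ : 𝟙 ⟶ H` is a cocharacter, i.e. a morphism of comonoid objects. -/
def HopfObj.IsCocharacter (A : _root_.HopfObj C) (σ : 𝟙_ C ⟶ A.X) : Prop :=
  σ ≫ A.comul = (λ_ (𝟙_ C)).inv ≫ (σ ⊗ₘ σ) ∧ σ ≫ A.counit = 𝟙 (𝟙_ C)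

/-- The morphism `m ∘ (m ⊗ 1_H) ∘ ((S ∘ σ) ⊗ (S̃ ∘ S̃) ⊗ σ) : H ⟶ H`
(with unitors inserted). -/
def HopfObj.bmpiMap (A : _root_.HopfObj C) (δ : A.X ⟶ 𝟙_ C) (σ : 𝟙_ C ⟶ A.X) :
    A.X ⟶ A.X :=
  (λ_ A.X).inv ≫ ((σ ≫ A.antipode) ⊗ₘ (A.twist δ ≫ A.twist δ)) ≫
    (ρ_ (A.X ⊗ A.X)).inv ≫ ((A.X ⊗ A.X) ◁ σ) ≫ (A.mul ▷ A.X) ≫ A.mul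

/-- `(δ, σ)` is a braided modular pair in involution. -/
def HopfObj.IsBMPI (A : _root_.HopfObj C) (δ : A.X ⟶ 𝟙_ C) (σ : 𝟙_ C ⟶ A.X) : Prop :=
  σ ≫ δ = 𝟙 (𝟙_ C) ∧ A.bmpiMap δ σ = 𝟙 A.X

/-- The Mathlib Hopf monoid structure on `A.X`. -/
@[reducible] def HopfObj.toMathlib (A : _root_.HopfObj C) : CategoryTheory.HopfObj A.X where
  mul := A.mul
  one := A.one
  comul := A.comul
  counit := A.counit
  antipode := A.antipode
  mul_assoc := A.mul_assoc
  one_mul := A.one_mul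
  mul_one := A.mul_one
  comul_assoc := A.comul_assoc.symm
  counit_comul := A.counit_comul
  comul_counit := A.comul_counit
  mul_comul := by
    have h := A.mul_comul
    simp only [tensorμ, Category.assoc] at h ⊢
    exact h
  one_comul := by
    have h := A.one_comul
    simp only [MonObj.tensorObj.one_def]
    exact h
  mul_counit := by
    have h := A.mul_counit
    simp only [Comon.tensorObj_counit]
    exact h
  one_counit := A.one_counit
  antipode_left := A.antipode_left
  antipode_right := A.antipode_right

theorem HopfObj.mul_antipode_aux (A : _root_.HopfObj C) :
    A.mul ≫ A.antipode = (A.antipode ⊗ₘ A.antipode) ≫ (β_ A.X A.X).hom ≫ A.mul :=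
  letI := A.toMathlib
  CategoryTheory.HopfObj.mul_antipode A.X

theorem HopfObj.one_antipode_aux (A : _root_.HopfObj C) :
    A.one ≫ A.antipode = A.one :=
  letI := A.toMathlib
  CategoryTheory.HopfObj.one_antipode A.X

theorem HopfObj.aux (A : _root_.HopfObj C) :
    A.comul ≫ (A.antipode ⊗ₘ (A.antipode ≫ A.antipode)) ≫ (β_ A.X A.X).hom ≫ A.mul =
      A.counit ≫ A.one := by
  have h : (A.antipode ⊗ₘ (A.antipode ≫ A.antipode)) =
      (A.X ◁ A.antipode) ≫ (A.antipode ⊗ₘ A.antipode) := by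
    simp [tensorHom_def']
  rw [h, Category.assoc, ← A.mul_antipode_aux]
  have := A.antipode_right =≫ A.antipode
  simp only [Category.assoc, A.one_antipode_aux] at this
  exact this

/-- `m ∘ ((S ∘ S) ⊗ S̃) ∘ ψ ∘ Δ = η ∘ δ`. -/
theorem HopfObj.mul_antipode_sq_twist (A : _root_.HopfObj C) (δ : A.X ⟶ 𝟙_ C)
    (hδ : A.IsCharacter δ) :
    A.comul ≫ (β_ A.X A.X).hom ≫ ((A.antipode ≫ A.antipode) ⊗ₘ A.twist δ) ≫ A.mul =
      δ ≫ A.one := by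
  rw [← BraidedCategory.braiding_naturality_assoc]
  have h : (A.twist δ ⊗ₘ (A.antipode ≫ A.antipode)) =
      (A.comul ▷ A.X) ≫ (α_ A.X A.X A.X).hom ≫ (δ ▷ (A.X ⊗ A.X)) ≫ (λ_ _).hom ≫
        (A.antipode ⊗ₘ (A.antipode ≫ A.antipode)) := by
    simp only [HopfObj.twist, MonoidalCategory.tensorHom_def, comp_whiskerRight, Category.assoc]
    monoidal
  have e := A.comul_assoc
  rw [h]
  simp only [Category.assoc]
  rw [reassoc_of% e, whisker_exchange_assoc, leftUnitor_naturality_assoc, A.aux,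
    ← leftUnitor_naturality_assoc, ← whisker_exchange_assoc, reassoc_of% A.comul_counit]
  simp [unitors_equal]
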